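/- arXiv:2110.05250 — 3 statements merged into one kernel-verified Lean document; each statement's English description precedes it below -/
import Mathlib

section
/- Let C be a closed, convex, bounded subset of a separable Banach space X with 0 ∈ C. If C is Haar positive (not Haar null), then every null sequence in X is C-fit, i.e., F_C(X) = c₀(X); in particular, C is compactivorous. -/
/-!
Suppose that a closed convex set `C` is not Haar null. Exhaust `C` by the bounded sets
`Cₙ = C ∩ n B_X`. If for every `n` some distribution on a tiny ball gave mass at most `δ < 1` to
each translate of `Cₙ`, then the law of the sum of independent variables with these distributions
would witness that `C` is Haar null: resampling a late enough variable shows that hitting a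
translate of `Cₙ` has conditional probability at most `δ` given any finite set of coordinates,
hence probability zero. So some `Cₙ` captures mass `3 / 4` of every distribution on some ball. By
the minimax theorem, `Cₙ` contains a translate of every finite subset of a smaller ball. Finally,
the points `k` of a small compact set are dyadic series `k = ∑ 2⁻ʲ dⱼ` with `dⱼ` in a finite set
`Fⱼ` depending only on `j`; if `zⱼ + Fⱼ ⊆ Cₙ`, then the infinite convex combination
`∑ 2⁻ʲ⁻¹ (zⱼ + dⱼ) = z + k / 2` lies in `Cₙ`.
-/

open Filter Topology Pointwise

/-- The symmetrisation of a sequence: `(x₀, x₁, …) ↦ (x₀, −x₀, x₁, −x₁, …)`. -/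
def symSeq {X : Type*} [NormedAddCommGroup X] (x : ℕ → X) : ℕ → X :=
  fun n => if n % 2 = 0 then x (n / 2) else -(x (n / 2))

/-- `x` is a `C`-fit sequence: `x` is a null sequence and there are `z` and `λ > 0`
with `z + Σ(x) ⊆ λ • C`. -/
def CFit {X : Type*} [NormedAddCommGroup X] [NormedSpace ℝ X] (C : Set X) (x : ℕ → X) : Prop :=
  Tendsto x atTop (𝓝 (0 : X)) ∧ ∃ (z : X) (l : ℝ), 0 < l ∧ ∀ n, z + symSeq x n ∈ l • C

/-- The `C`-fitting cost `φ_C(x) = inf {‖z‖ + λ : z + Σ(x) ⊆ λ • C, λ > 0}`. -/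
noncomputable def phiC {X : Type*} [NormedAddCommGroup X] [NormedSpace ℝ X]
    (C : Set X) (x : ℕ → X) : ℝ :=
  sInf {c : ℝ | ∃ (z : X) (l : ℝ), 0 < l ∧ (∀ n, z + symSeq x n ∈ l • C) ∧ c = ‖z‖ + l}

/-- `E` is compactivorous. -/
def Compactivorous {X : Type*} [NormedAddCommGroup X] [NormedSpace ℝ X] (E : Set X) : Prop :=
  ∀ K : Set X, IsCompact K → ∃ (z : X) (δ : ℝ), 0 < δ ∧ (fun k => z + δ • k) '' K ⊆ E

/-- `E` is Haar null: some Borel probability measure kills every translate of `E`. -/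
def HaarNull {X : Type*} [NormedAddCommGroup X] [MeasurableSpace X] (E : Set X) : Prop :=
  ∃ μ : MeasureTheory.Measure X, MeasureTheory.IsProbabilityMeasure μ ∧
    ∀ x : X, μ ((fun e => x + e) '' E) = 0

open MeasureTheory Set
open scoped ENNReal

section ZeroOneLaw

theorem measure_eq_zero_of_forall_measure_inter_le {α : Type*} [MeasurableSpace α]
    {μ : Measure α} [IsFiniteMeasure μ] {𝒜 : Set (Set α)} (h𝒜 : μ.MeasureDense 𝒜) {c : ℝ≥0∞}
    (hc : c < 1) {A : Set α} (hA : MeasurableSet A) (h : ∀ B ∈ 𝒜, μ (A ∩ B) ≤ c * μ B) :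
    μ A = 0 := by
  have hle : μ A ≤ c * μ A := by
    refine ENNReal.le_of_forall_pos_le_add fun ε hε _ => ?_
    obtain ⟨B, hB, hAB⟩ := h𝒜.approx A hA (measure_ne_top μ A) (ε / 2) (by positivity)
    have hμB : μ B ≤ μ A + μ (symmDiff A B) := by
      refine (measure_mono fun x hx => ?_).trans (measure_union_le _ _)
      by_cases hxA : x ∈ A
      exacts [.inl hxA, .inr (.inr ⟨hx, hxA⟩)]
    calc μ A ≤ μ (A ∩ B) + μ (symmDiff A B) := by
          refine (measure_mono fun x hx => ?_).trans (measure_union_le _ _)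
          by_cases hxB : x ∈ B
          exacts [.inl ⟨hx, hxB⟩, .inr (.inl ⟨hx, hxB⟩)]
      _ ≤ c * (μ A + μ (symmDiff A B)) + μ (symmDiff A B) := by grw [h B hB, hμB]
      _ ≤ c * μ A + (μ (symmDiff A B) + μ (symmDiff A B)) := by
          rw [mul_add, add_assoc]
          gcongr
          exact mul_le_of_le_one_left' hc.le
      _ ≤ c * μ A + (ENNReal.ofReal (ε / 2) + ENNReal.ofReal (ε / 2)) := by gcongr
      _ = c * μ A + ε := by
          rw [← ENNReal.ofReal_add (by positivity) (by positivity), add_halves,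
            ENNReal.ofReal_coe_nnreal]
  by_contra hA0
  exact hle.not_gt (by simpa using ENNReal.mul_lt_mul_left hA0 (measure_ne_top μ A) hc)

variable {ι : Type*} [DecidableEq ι] {E : ι → Type*} [∀ i, MeasurableSpace (E i)]
  (m : (i : ι) → Measure (E i)) [∀ i, IsProbabilityMeasure (m i)]

theorem map_update_prod_infinitePi (k : ι) :
    ((Measure.infinitePi m).prod (m k)).map (fun p => Function.update p.1 k p.2) =
      Measure.infinitePi m := by
  refine Measure.eq_infinitePi _ fun s t ht => ?_
  have hpre : (fun p : (Π i, E i) × E k => Function.update p.1 k p.2) ⁻¹' Set.pi s t =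
      (Set.pi (s.erase k) t) ×ˢ (if k ∈ s then t k else univ) := by
    ext p
    simp only [mem_preimage, Set.mem_pi, mem_prod, SetLike.mem_coe, Finset.mem_erase]
    constructor
    · intro h
      refine ⟨fun i hi => by simpa [hi.1] using h i hi.2, ?_⟩
      split_ifs with hk
      · simpa using h k hk
      · trivial
    · rintro ⟨hne, heq⟩ i hi
      by_cases hik : i = k
      · subst hik
        simpa [hi] using heq
      · simpa [hik] using hne i ⟨hik, hi⟩
  rw [Measure.map_apply (by fun_prop) (MeasurableSet.pi s.countable_toSet fun i _ => ht i), hpre,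
    Measure.prod_prod, Measure.infinitePi_pi _ (fun i _ => ht i)]
  split_ifs with hk
  · exact Finset.prod_erase_mul _ _ hk
  · rw [Finset.erase_eq_of_notMem hk, measure_univ, mul_one]

theorem infinitePi_inter_cylinder_le {A : Set (Π i, E i)} (hA : MeasurableSet A) {c : ℝ≥0∞} {k : ι}
    (h : ∀ ω, m k {v | Function.update ω k v ∈ A} ≤ c) {s : Finset ι} (hk : k ∉ s)
    {S : Set (Π i : s, E i)} (hS : MeasurableSet S) :
    Measure.infinitePi m (A ∩ cylinder s S) ≤ c * Measure.infinitePi m (cylinder s S) := by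
  have hmeas : Measurable fun p : (Π i, E i) × E k => Function.update p.1 k p.2 := by fun_prop
  have hB : MeasurableSet (cylinder s S) := hS.cylinder
  have hupdate : ∀ ω v, Function.update ω k v ∈ cylinder s S ↔ ω ∈ cylinder s S := fun ω v => by
    have hrestrict : s.restrict (Function.update ω k v) = s.restrict ω :=
      funext fun i => Function.update_of_ne (ne_of_mem_of_not_mem i.2 hk) _ _
    rw [mem_cylinder, mem_cylinder, hrestrict]
  conv_lhs => rw [← map_update_prod_infinitePi m k]
  rw [Measure.map_apply hmeas (hA.inter hB), Measure.prod_apply (hmeas (hA.inter hB)),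
    ← lintegral_indicator_const hB]
  refine lintegral_mono fun ω => ?_
  by_cases hω : ω ∈ cylinder s S
  · rw [indicator_of_mem hω]
    exact (measure_mono fun v hv => hv.1).trans (h ω)
  · rw [indicator_of_notMem hω]
    exact (measure_mono_null (fun v hv => hω ((hupdate ω v).1 hv.2)) measure_empty).le

theorem infinitePi_eq_zero_of_infinite_setOf_update_le {A : Set (Π i, E i)} (hA : MeasurableSet A)
    {c : ℝ≥0∞} (hc : c < 1)
    (h : {k | ∀ ω, m k {v | Function.update ω k v ∈ A} ≤ c}.Infinite) :
    Measure.infinitePi m A = 0 := by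
  have hdense : (Measure.infinitePi m).MeasureDense (measurableCylinders E) :=
    .of_generateFrom_isSetAlgebra_finite _ isSetAlgebra_measurableCylinders
      generateFrom_measurableCylinders.symm
  refine measure_eq_zero_of_forall_measure_inter_le hdense hc hA fun B hB => ?_
  obtain ⟨s, S, hS, rfl⟩ := (mem_measurableCylinders B).1 hB
  obtain ⟨k, hk, hks⟩ := h.exists_notMem_finset s
  exact infinitePi_inter_cylinder_le m hA hk hks hS

end ZeroOneLaw

section HaarPositive

theorem tsum_apply_update {ι : Type*} [DecidableEq ι] {E : ι → Type*} {G : Type*} [AddCommGroup G]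
    [TopologicalSpace G] [IsTopologicalAddGroup G] [T2Space G] (f : ∀ i, E i → G) {ω : ∀ i, E i}
    (hω : Summable fun i => f i (ω i)) (k : ι) (v : E k) :
    ∑' i, f i (Function.update ω k v i) = f k v - f k (ω k) + ∑' i, f i (ω i) := by
  simp only [Function.apply_update fun i => f i]
  exact (hω.hasSum.update k _).tsum_eq

variable {X : Type*} [NormedAddCommGroup X]

/-- The witness is the law of `∑ fₖ` for independent `fₖ` with laws `mₖ ∘ fₖ⁻¹`. -/
theorem haarNull_iUnion_of_forall_measure_le [CompleteSpace X] [MeasurableSpace X] [BorelSpace X]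
    {C : ℕ → Set X} (hC : ∀ n, MeasurableSet (C n)) (hmono : Monotone C)
    {E : ℕ → Type*} [∀ k, MeasurableSpace (E k)] (m : ∀ k, Measure (E k))
    [∀ k, IsProbabilityMeasure (m k)] {f : ∀ k, E k → X} (hf : ∀ k, StronglyMeasurable (f k))
    {r : ℕ → ℝ} (hr : Summable r) (hfr : ∀ k v, ‖f k v‖ ≤ r k) {c : ℝ≥0∞} (hc : c < 1)
    (h : ∀ k z, m k {v | z + f k v ∈ C k} ≤ c) : HaarNull (⋃ n, C n) := by
  let S : (∀ k, E k) → X := fun ω => ∑' k, f k (ω k)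
  have hS : Measurable S := (StronglyMeasurable.tsum fun k =>
    (hf k).comp_measurable (measurable_pi_apply k)).measurable
  refine ⟨(Measure.infinitePi m).map S, Measure.isProbabilityMeasure_map hS.aemeasurable,
    fun x => ?_⟩
  have hx : ∀ n, MeasurableSet ((-x + ·) ⁻¹' C n) := fun n => measurable_const_add _ (hC n)
  rw [image_add_left, preimage_iUnion, measure_iUnion_null_iff]
  intro n
  rw [Measure.map_apply hS (hx n)]
  refine infinitePi_eq_zero_of_infinite_setOf_update_le m (hS (hx n)) hc
    ((Ici_infinite n).mono fun k hk ω => ?_)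
  have hω : Summable fun j => f j (ω j) := .of_norm_bounded hr fun j => hfr j (ω j)
  refine (measure_mono fun v hv => ?_).trans (h k (-x + (S ω - f k (ω k))))
  have hSv : S (Function.update ω k v) = f k v - f k (ω k) + S ω := tsum_apply_update f hω k v
  have hv' : -x + S (Function.update ω k v) ∈ C n := hv
  refine hmono hk ?_
  convert hv' using 1
  rw [hSv]
  abel

theorem exists_isProbabilityMeasure_apply_eq_sum {ι : Type*} [Fintype ι] [MeasurableSpace ι]
    [MeasurableSingletonClass ι] {w : ι → ℝ} (hw : w ∈ stdSimplex ℝ ι) :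
    ∃ m : Measure ι, IsProbabilityMeasure m ∧
      ∀ s, m s = ENNReal.ofReal (∑ i, s.indicator w i) := by
  have hsum : ∑ i, ENNReal.ofReal (w i) = 1 := by
    rw [← ENNReal.ofReal_sum_of_nonneg fun i _ => hw.1 i, hw.2, ENNReal.ofReal_one]
  refine ⟨(PMF.ofFintype _ hsum).toMeasure, inferInstance, fun s => ?_⟩
  rw [PMF.toMeasure_apply_fintype,
    ENNReal.ofReal_sum_of_nonneg fun i _ => indicator_nonneg (fun i _ => hw.1 i) i]
  refine Finset.sum_congr rfl fun i _ => ?_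
  by_cases hi : i ∈ s <;> simp [hi]

/-- The finite-support form of Matoušková's `(δ, r)` condition: every finitely supported
probability distribution on the ball of radius `r` gives mass more than `δ` to some translate
of `E`. The distribution is encoded by its atoms `f i`, possibly repeated, and their weights
`w i`. -/
def CapturesMass (E : Set X) (δ r : ℝ) : Prop :=
  ∀ (n : ℕ) (f : Fin n → X) (w : Fin n → ℝ), (∀ i, ‖f i‖ ≤ r) → w ∈ stdSimplex ℝ (Fin n) →
    ∃ z, δ < ∑ i, {i | z + f i ∈ E}.indicator w i

theorem exists_capturesMass_of_not_haarNull_iUnion [CompleteSpace X] [MeasurableSpace X]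
    [BorelSpace X] {C : ℕ → Set X} (hC : ∀ n, MeasurableSet (C n)) (hmono : Monotone C)
    (hpos : ¬ HaarNull (⋃ n, C n)) {δ : ℝ} (hδ : δ < 1) :
    ∃ n, ∃ r > 0, CapturesMass (C n) δ r := by
  by_contra! hfail
  simp only [CapturesMass, not_forall, not_exists, not_lt] at hfail
  choose N f w hf hw hle using fun k : ℕ => hfail k ((1 / 2) ^ k) (by positivity)
  choose m hm hm_apply using fun k => exists_isProbabilityMeasure_apply_eq_sum (hw k)
  refine hpos (haarNull_iUnion_of_forall_measure_le hC hmono m (fun k => .of_discrete)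
    summable_geometric_two hf (ENNReal.ofReal_lt_one.2 hδ) fun k z => ?_)
  rw [hm_apply]
  exact ENNReal.ofReal_le_ofReal (hle k z)

end HaarPositive

section FiniteTranslates

theorem exists_mem_forall_lt_of_forall_stdSimplex {ι : Type*} [Fintype ι] [Nonempty ι]
    {T s : Set (ι → ℝ)} (hT : Convex ℝ T) (hs : s.Finite) (hsT : s ⊆ T) {θ : ℝ}
    (h : ∀ w ∈ stdSimplex ℝ ι, ∃ a ∈ s, θ < w ⬝ᵥ a) : ∃ a ∈ T, ∀ i, θ < a i := by
  classical
  have hfst (a : ι → ℝ) : IsLinearMap ℝ fun w : ι → ℝ => w ⬝ᵥ a :=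
    ⟨fun v w => add_dotProduct v w a, fun c w => smul_dotProduct c w a⟩
  have hsnd (w : ι → ℝ) : IsLinearMap ℝ fun a : ι → ℝ => w ⬝ᵥ a :=
    ⟨dotProduct_add w, fun c a => dotProduct_smul c w a⟩
  obtain ⟨a, haT, ha⟩ := Sion.exists_lt_iInf_of_lt_iInf_of_finite (f := fun w a => w ⬝ᵥ a)
    ⟨_, single_mem_stdSimplex ℝ (Classical.arbitrary ι)⟩ (isCompact_stdSimplex ℝ ι)
    (fun a _ => (by fun_prop : Continuous fun w : ι → ℝ => w ⬝ᵥ a).lowerSemicontinuous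
      |>.lowerSemicontinuousOn _)
    (fun a _ => ((hfst a).mk' _).convexOn (convex_stdSimplex ℝ ι) |>.quasiconvexOn) hT
    (fun w _ => (by fun_prop : Continuous fun a : ι → ℝ => w ⬝ᵥ a).upperSemicontinuous
      |>.upperSemicontinuousOn _)
    (fun w _ => ((hsnd w).mk' _).concaveOn hT |>.quasiconcaveOn) (convex_stdSimplex ℝ ι) hs hsT h
  exact ⟨a, haT, fun i => by simpa using ha _ (single_mem_stdSimplex ℝ i)⟩

variable {X : Type*} [NormedAddCommGroup X] {C : Set X}

/-- Giving the origin an extra weight `1 / 2` forces the translation vector into `C`. -/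
theorem CapturesMass.exists_mem_lt_sum_indicator {δ r : ℝ} (h : CapturesMass C δ r) (hδ : 1 / 2 ≤ δ)
    (hr : 0 ≤ r) {n : ℕ} {f : Fin n → X} (hf : ∀ i, ‖f i‖ ≤ r) {w : Fin n → ℝ}
    (hw : w ∈ stdSimplex ℝ (Fin n)) :
    ∃ z ∈ C, 2 * δ - 1 < ∑ i, {i | z + f i ∈ C}.indicator w i := by
  classical
  obtain ⟨z, hz⟩ := h (n + 1) (Fin.cons 0 f) (Fin.cons (1 / 2) fun i => w i / 2)
    (Fin.cases (by simpa using hr) (by simpa using hf))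
    ⟨Fin.cases (by simp) fun i => by simpa using div_nonneg (hw.1 i) zero_le_two, by
      simp only [Fin.sum_univ_succ, Fin.cons_zero, Fin.cons_succ, ← Finset.sum_div, hw.2,
        add_halves]⟩
  have hmass : δ < (if z ∈ C then 1 / 2 else 0) + (∑ i, {i | z + f i ∈ C}.indicator w i) / 2 := by
    simpa [Fin.sum_univ_succ, indicator_apply, Finset.sum_div, ite_div] using hz
  have hle : ∑ i, {i | z + f i ∈ C}.indicator w i ≤ 1 :=
    hw.2 ▸ Finset.sum_le_sum fun i _ => indicator_le_self' (fun i _ => hw.1 i) i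
  split_ifs at hmass with hzC
  · exact ⟨z, hzC, by linarith⟩
  · linarith

/-- `C` contains a translate of `{0} ∪ F` for every finite subset `F` of the ball of
radius `r`. -/
def ContainsFiniteTranslates (C : Set X) (r : ℝ) : Prop :=
  ∀ F : Set X, F.Finite → (∀ x ∈ F, ‖x‖ ≤ r) → ∃ z ∈ C, ∀ x ∈ F, z + x ∈ C

variable [NormedSpace ℝ X]

/-- The vectors of scaling factors `a` for which `C` contains a translate of the points
`0` and `a i • f i`. -/
def admissibleScalings {ι : Type*} (C : Set X) (f : ι → X) : Set (ι → ℝ) :=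
  {a | ∃ z ∈ C, ∀ i, z + a i • f i ∈ C}

theorem convex_admissibleScalings {ι : Type*} (hC : Convex ℝ C) (f : ι → X) :
    Convex ℝ (admissibleScalings C f) := by
  rintro a ⟨z, hz, hza⟩ b ⟨w, hw, hwb⟩ s t hs ht hst
  refine ⟨s • z + t • w, hC hz hw hs ht hst, fun i => ?_⟩
  convert hC (hza i) (hwb i) hs ht hst using 1
  simp only [Pi.add_apply, Pi.smul_apply, smul_eq_mul]
  module

namespace CapturesMass

variable {δ r : ℝ}

theorem exists_mem_admissibleScalings (h : CapturesMass C δ r) (hC : Convex ℝ C) (hδ : 1 / 2 ≤ δ)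
    (hr : 0 ≤ r) {n : ℕ} [Nonempty (Fin n)] {f : Fin n → X} (hf : ∀ i, ‖f i‖ ≤ r) :
    ∃ a ∈ admissibleScalings C f, ∀ i, 2 * δ - 1 < a i := by
  let pure : Set (Fin n → ℝ) := range fun P : Set (Fin n) => P.indicator 1
  refine exists_mem_forall_lt_of_forall_stdSimplex (s := admissibleScalings C f ∩ pure)
    (convex_admissibleScalings hC f) ((finite_range _).inter_of_right _) inter_subset_left
    fun w hw => ?_
  obtain ⟨z, hzC, hz⟩ := h.exists_mem_lt_sum_indicator hδ hr hf hw
  refine ⟨{i | z + f i ∈ C}.indicator 1, ⟨⟨z, hzC, fun i => ?_⟩, mem_range_self _⟩, ?_⟩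
  · by_cases hi : z + f i ∈ C <;> simp [hi, hzC]
  · rw [dotProduct]
    convert hz using 2 with i
    by_cases hi : z + f i ∈ C <;> simp [hi]

theorem containsFiniteTranslates (h : CapturesMass C δ r) (hC : Convex ℝ C) (hδ : 1 / 2 < δ)
    (hr : 0 ≤ r) : ContainsFiniteTranslates C ((2 * δ - 1) * r) := by
  intro F hF hFr
  have hθ : 0 < 2 * δ - 1 := by linarith
  -- The origin is added so that the index type of the minimax theorem is nonempty.
  obtain ⟨n, g, -, hg⟩ := (hF.insert 0).fin_param
  obtain ⟨i₀, -⟩ : (0 : X) ∈ range g := hg ▸ mem_insert 0 F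
  have : Nonempty (Fin n) := ⟨i₀⟩
  have hgr : ∀ i, ‖(2 * δ - 1)⁻¹ • g i‖ ≤ r := fun i => by
    rw [norm_smul, norm_inv, Real.norm_of_nonneg hθ.le, inv_mul_le_iff₀ hθ]
    obtain hi | hi : g i ∈ insert 0 F := hg ▸ mem_range_self i
    · rw [hi, norm_zero]
      positivity
    · exact hFr _ hi
  obtain ⟨a, ⟨z, hzC, hza⟩, ha⟩ := h.exists_mem_admissibleScalings hC hδ.le hr hgr
  refine ⟨z, hzC, fun x hx => ?_⟩
  obtain ⟨i, rfl⟩ : x ∈ range g := hg ▸ mem_insert_of_mem 0 hx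
  have hai : 0 < a i := hθ.trans (ha i)
  have hmem := hC.add_smul_mem hzC (hza i) (t := (2 * δ - 1) / a i)
    ⟨by positivity, (div_le_one hai).2 (ha i).le⟩
  rwa [smul_smul, smul_smul, div_mul_cancel₀ _ hai.ne', mul_inv_cancel₀ hθ.ne', one_smul] at hmem

end CapturesMass

end FiniteTranslates

section Compactivorous

theorem hasSum_smul_mem_of_convex {ι E : Type*} [AddCommGroup E] [Module ℝ E] [TopologicalSpace E]
    [ContinuousSMul ℝ E] {s : Set E} (hs : IsClosed s) (hconv : Convex ℝ s) {w : ι → ℝ}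
    (hw₀ : ∀ i, 0 ≤ w i) (hw₁ : HasSum w 1) {u : ι → E} (hu : ∀ i, u i ∈ s) {x : E}
    (hx : HasSum (fun i => w i • u i) x) : x ∈ s := by
  have hlim : Tendsto (fun t : Finset ι => t.centerMass w u) atTop (𝓝 x) := by
    simpa only [HasSum, SummationFilter.unconditional_filter, Finset.centerMass, inv_one,
      one_smul] using (Tendsto.inv₀ hw₁ one_ne_zero).smul hx
  refine hs.mem_of_tendsto hlim ?_
  filter_upwards [Tendsto.eventually_const_lt zero_lt_one hw₁] with t ht
  exact hconv.centerMass_mem (fun i _ => hw₀ i) ht fun i _ => hu i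

theorem hasSum_half_pow_succ : HasSum (fun j : ℕ => (1 / 2 : ℝ) ^ (j + 1)) 1 := by
  simpa only [pow_succ, mul_one_div_cancel (two_ne_zero' ℝ)] using
    hasSum_geometric_two.mul_right (1 / 2 : ℝ)

variable {X : Type*} [NormedAddCommGroup X]

section DyadicExpansion

variable {r : ℝ}

theorem exists_finite_dyadic_nets (hr : 0 < r) {K : Set X} (hK : IsCompact K)
    (hKr : ∀ x ∈ K, ‖x‖ ≤ r) : ∃ G : ℕ → Set X, (∀ j, (G j).Finite) ∧ G 0 = {0} ∧
      ∀ x ∈ K, ∀ j, ∃ g ∈ G j, ‖x - g‖ ≤ r * (1 / 2) ^ j := by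
  choose t _ ht hcover using fun j : ℕ =>
    hK.finite_cover_balls (show 0 < r * (1 / 2 : ℝ) ^ j by positivity)
  refine ⟨fun | 0 => {0} | j + 1 => t (j + 1), ?_, rfl, fun x hx => ?_⟩
  · rintro (_ | j)
    exacts [finite_singleton 0, ht _]
  · rintro (_ | j)
    · exact ⟨0, rfl, by simpa using hKr x hx⟩
    · obtain ⟨g, hg, hxg⟩ := mem_iUnion₂.1 (hcover (j + 1) hx)
      exact ⟨g, hg, (mem_ball_iff_norm.1 hxg).le⟩

variable [NormedSpace ℝ X] {x : X} {g : ℕ → X}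

theorem norm_two_pow_smul_sub_le (hg : ∀ j, ‖x - g j‖ ≤ r * (1 / 2) ^ j) (j : ℕ) :
    ‖(2 : ℝ) ^ j • (g (j + 1) - g j)‖ ≤ 2 * r := by
  have hr : 0 ≤ r := by simpa using (norm_nonneg _).trans (hg 0)
  rw [norm_smul, norm_pow, Real.norm_two]
  calc 2 ^ j * ‖g (j + 1) - g j‖ = 2 ^ j * ‖(x - g j) - (x - g (j + 1))‖ := by
        rw [sub_sub_sub_cancel_left]
    _ ≤ 2 ^ j * (r * (1 / 2) ^ j + r * (1 / 2) ^ (j + 1)) := by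
        grw [norm_sub_le, hg j, hg (j + 1)]
    _ = (2 * (1 / 2)) ^ j * (r + r / 2) := by
        rw [mul_pow]
        ring
    _ ≤ 2 * r := by
        norm_num
        linarith

theorem hasSum_half_pow_smul_two_pow_smul_sub [CompleteSpace X] (hg₀ : g 0 = 0)
    (hg : ∀ j, ‖x - g j‖ ≤ r * (1 / 2) ^ j) :
    HasSum (fun j => (1 / 2 : ℝ) ^ j • (2 : ℝ) ^ j • (g (j + 1) - g j)) x := by
  have hsummable : Summable fun j => (1 / 2 : ℝ) ^ j • (2 : ℝ) ^ j • (g (j + 1) - g j) := by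
    refine .of_norm_bounded (summable_geometric_two.mul_right (2 * r)) fun j => ?_
    rw [norm_smul, Real.norm_of_nonneg (by positivity)]
    grw [norm_two_pow_smul_sub_le hg j]
  have hlim : Tendsto g atTop (𝓝 x) := by
    refine tendsto_iff_norm_sub_tendsto_zero.2 (squeeze_zero (fun _ => norm_nonneg _)
      (fun j => (norm_sub_rev _ _).trans_le (hg j)) ?_)
    simpa using (tendsto_pow_atTop_nhds_zero_of_lt_one (r := (1 / 2 : ℝ)) (by norm_num)
      (by norm_num)).const_mul r
  rw [hsummable.hasSum_iff_tendsto_nat]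
  simpa only [smul_smul, ← mul_pow, one_div_mul_cancel (two_ne_zero' ℝ), one_pow, one_smul,
    Finset.sum_range_sub, hg₀, sub_zero] using hlim

theorem exists_finite_dyadic_digits [CompleteSpace X] (hr : 0 < r) {K : Set X} (hK : IsCompact K)
    (hKr : ∀ x ∈ K, ‖x‖ ≤ r) : ∃ F : ℕ → Set X,
      (∀ j, (F j).Finite) ∧ (∀ j, ∀ d ∈ F j, ‖d‖ ≤ 2 * r) ∧
      ∀ x ∈ K, ∃ d : ℕ → X, (∀ j, d j ∈ F j) ∧ HasSum (fun j => (1 / 2 : ℝ) ^ j • d j) x := by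
  obtain ⟨G, hGfin, hG₀, hG⟩ := exists_finite_dyadic_nets hr hK hKr
  let D : ℕ → Set X := fun j => image2 (fun a b => (2 : ℝ) ^ j • (a - b)) (G (j + 1)) (G j)
  refine ⟨fun j => D j ∩ {d | ‖d‖ ≤ 2 * r},
    fun j => ((hGfin (j + 1)).image2 _ (hGfin j)).inter_of_left _, fun j d hd => hd.2,
    fun x hx => ?_⟩
  choose g hgG hg using hG x hx
  have hg₀ : g 0 = 0 := by simpa [hG₀] using hgG 0
  exact ⟨_, fun j => ⟨mem_image2_of_mem (hgG (j + 1)) (hgG j), norm_two_pow_smul_sub_le hg j⟩,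
    hasSum_half_pow_smul_two_pow_smul_sub hg₀ hg⟩

end DyadicExpansion

namespace ContainsFiniteTranslates

variable [NormedSpace ℝ X] [CompleteSpace X] {C : Set X} {r : ℝ}

theorem exists_forall_add_half_smul_mem (h : ContainsFiniteTranslates C (2 * r)) (hr : 0 < r)
    (hC : IsClosed C) (hconv : Convex ℝ C) (hbdd : Bornology.IsBounded C) {K : Set X}
    (hK : IsCompact K) (hKr : ∀ x ∈ K, ‖x‖ ≤ r) : ∃ z, ∀ x ∈ K, z + (1 / 2 : ℝ) • x ∈ C := by
  obtain ⟨F, hFfin, hFr, hF⟩ := exists_finite_dyadic_digits hr hK hKr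
  choose z hzC hz using fun j => h (F j) (hFfin j) (hFr j)
  obtain ⟨M, hM⟩ := hbdd.exists_norm_le
  have hsummable : Summable fun j => (1 / 2 : ℝ) ^ (j + 1) • z j := by
    refine .of_norm_bounded (hasSum_half_pow_succ.summable.mul_right M) fun j => ?_
    rw [norm_smul, Real.norm_of_nonneg (by positivity)]
    grw [hM _ (hzC j)]
  refine ⟨∑' j, (1 / 2 : ℝ) ^ (j + 1) • z j, fun x hx => ?_⟩
  obtain ⟨d, hdF, hd⟩ := hF x hx
  have hsum : HasSum (fun j => (1 / 2 : ℝ) ^ (j + 1) • (z j + d j))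
      (∑' j, (1 / 2 : ℝ) ^ (j + 1) • z j + (1 / 2 : ℝ) • x) := by
    simpa only [smul_add, smul_smul, ← pow_succ'] using
      hsummable.hasSum.add (hd.const_smul (1 / 2 : ℝ))
  exact hasSum_smul_mem_of_convex hC hconv (fun j => by positivity) hasSum_half_pow_succ
    (fun j => hz j _ (hdF j)) hsum

theorem compactivorous (h : ContainsFiniteTranslates C r) (hr : 0 < r) (hC : IsClosed C)
    (hconv : Convex ℝ C) (hbdd : Bornology.IsBounded C) : Compactivorous C := by
  intro K hK
  obtain ⟨R, hR, hKR⟩ := hK.isBounded.exists_pos_norm_le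
  have hball : ∀ y ∈ (r / 2 / R) • K, ‖y‖ ≤ r / 2 := by
    rintro _ ⟨x, hx, rfl⟩
    calc ‖(r / 2 / R) • x‖ = r / 2 / R * ‖x‖ := by
          rw [norm_smul, Real.norm_of_nonneg (by positivity)]
      _ ≤ r / 2 / R * R := by grw [hKR x hx]
      _ = r / 2 := div_mul_cancel₀ _ hR.ne'
  rw [← mul_div_cancel₀ r two_ne_zero] at h
  obtain ⟨z, hz⟩ := h.exists_forall_add_half_smul_mem (half_pos hr) hC hconv hbdd
    (hK.smul (r / 2 / R)) hball
  refine ⟨z, 1 / 2 * (r / 2 / R), by positivity, ?_⟩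
  rintro _ ⟨x, hx, rfl⟩
  simpa only [mul_smul] using hz _ (smul_mem_smul_set hx)

end ContainsFiniteTranslates

theorem tendsto_symSeq_zero {x : ℕ → X} (hx : Tendsto x atTop (𝓝 0)) :
    Tendsto (symSeq x) atTop (𝓝 0) := by
  have hnorm : ∀ n, ‖symSeq x n‖ = ‖x (n / 2)‖ := fun n => by
    unfold symSeq
    split_ifs
    exacts [rfl, norm_neg _]
  rw [tendsto_zero_iff_norm_tendsto_zero]
  simpa only [hnorm, Function.comp_def] using (tendsto_zero_iff_norm_tendsto_zero.1 hx).comp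
    (Nat.tendsto_div_const_atTop two_ne_zero)

namespace Compactivorous

variable [NormedSpace ℝ X] {C D : Set X}

theorem mono (hC : Compactivorous C) (hCD : C ⊆ D) : Compactivorous D := fun K hK =>
  let ⟨z, δ, hδ, hzK⟩ := hC K hK
  ⟨z, δ, hδ, hzK.trans hCD⟩

theorem cFit (hC : Compactivorous C) {x : ℕ → X} (hx : Tendsto x atTop (𝓝 0)) : CFit C x := by
  obtain ⟨z, δ, hδ, hsub⟩ := hC _ (tendsto_symSeq_zero hx).isCompact_insert_range
  refine ⟨hx, δ⁻¹ • z, δ⁻¹, inv_pos.2 hδ, fun n => ⟨z + δ • symSeq x n, ?_, ?_⟩⟩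
  · exact hsub (mem_image_of_mem _ (mem_insert_of_mem _ (mem_range_self n)))
  · simp only [smul_add, inv_smul_smul₀ hδ.ne']

end Compactivorous

end Compactivorous

theorem statement11_general {X : Type*} [NormedAddCommGroup X] [NormedSpace ℝ X] [CompleteSpace X]
    [MeasurableSpace X] [BorelSpace X] (C : Set X) (hC : IsClosed C) (hconv : Convex ℝ C)
    (hpos : ¬ HaarNull C) :
    (∀ x : ℕ → X, Tendsto x atTop (𝓝 (0 : X)) → CFit C x) ∧ Compactivorous C := by
  suffices hcomp : Compactivorous C from ⟨fun _ => hcomp.cFit, hcomp⟩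
  let Cₙ : ℕ → Set X := fun n => C ∩ Metric.closedBall 0 n
  have hclosed : ∀ n, IsClosed (Cₙ n) := fun n => hC.inter Metric.isClosed_closedBall
  have hmono : Monotone Cₙ := fun k n hkn =>
    inter_subset_inter_right C (Metric.closedBall_subset_closedBall (Nat.cast_le.2 hkn))
  have hunion : ⋃ n, Cₙ n = C := by
    rw [← inter_iUnion, Metric.iUnion_closedBall_nat, inter_univ]
  obtain ⟨n, r, hr, hcapture⟩ : ∃ n, ∃ r > 0, CapturesMass (Cₙ n) (3 / 4) r :=
    exists_capturesMass_of_not_haarNull_iUnion (fun n => (hclosed n).measurableSet) hmono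
      (hunion.symm ▸ hpos) (by norm_num)
  have hconvₙ : Convex ℝ (Cₙ n) := hconv.inter (convex_closedBall 0 _)
  exact (hcapture.containsFiniteTranslates hconvₙ (by norm_num) hr.le).compactivorous
    (by positivity) (hclosed n) hconvₙ (Metric.isBounded_closedBall.subset inter_subset_right)
    |>.mono inter_subset_left

/-- a Haar positive closed convex bounded set `C ∋ 0` in a separable Banach
space satisfies `F_C(X) = c₀(X)` (every null sequence is `C`-fit); in particular `C` is
compactivorous. -/
theorem statement11 {X : Type*} [NormedAddCommGroup X] [NormedSpace ℝ X] [CompleteSpace X]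
    [TopologicalSpace.SeparableSpace X] [MeasurableSpace X] [BorelSpace X]
    (C : Set X) (hC : IsClosed C) (hconv : Convex ℝ C) (hbdd : Bornology.IsBounded C)
    (h0 : (0 : X) ∈ C) (hpos : ¬ HaarNull C) :
    (∀ x : ℕ → X, Tendsto x atTop (𝓝 (0 : X)) → CFit C x) ∧ Compactivorous C :=
  statement11_general C hC hconv hpos
end

section
/- If C is a Haar positive closed convex set in a separable Banach space X, then some bounded piece C ∩ nB_X (n a positive integer) is Haar positive; consequently, since Haar positive closed bounded convex sets are compactivorous, C itself is compactivorous. -/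
/-!
The bounded pieces `C ∩ n B_X` are countably many Borel sets with union `C`, so everything rests on
Haar null Borel sets being closed under countable unions. If `μ` annihilates all translates of `E`,
so does every convolution `ν ∗ μ`; it is therefore enough to convolve all the witnesses `μ i` of
the given sets. Conditioning `μ i` on a small ball and translating the ball to the origin yields a
witness concentrated on vectors of norm at most `r i`, with `r` summable. Independent random vectors
`Y i` distributed according to these new witnesses have an almost surely convergent sum, whose law
is, for every `i`, the convolution of the law of `∑' j ≠ i, Y j` with that of `Y i`.
-/

open MeasureTheory ProbabilityTheory

/-- The measure `μ` is transverse to `E` if it annihilates every left translate of `E`. A Haar null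
set is one that has a transverse probability measure. -/
def TransverseTo {G : Type*} [Add G] [MeasurableSpace G] (μ : Measure G) (E : Set G) : Prop :=
  ∀ x : G, μ ((fun e => x + e) '' E) = 0

namespace TransverseTo

variable {G : Type*} [MeasurableSpace G]

theorem mono_set [Add G] {μ : Measure G} {D E : Set G} (h : TransverseTo μ E) (hDE : D ⊆ E) :
    TransverseTo μ D :=
  fun x => measure_mono_null (Set.image_mono hDE) (h x)

theorem mono_ac [Add G] {μ ν : Measure G} {E : Set G} (h : TransverseTo μ E) (hνμ : ν ≪ μ) :
    TransverseTo ν E :=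
  fun x => hνμ (h x)

theorem iUnion [Add G] {ι : Type*} [Countable ι] {μ : Measure G} {E : ι → Set G}
    (h : ∀ i, TransverseTo μ (E i)) : TransverseTo μ (⋃ i, E i) := fun x => by
  rw [Set.image_iUnion]
  exact measure_iUnion_null fun i => h i x

theorem conv_left [AddGroup G] [MeasurableAdd₂ G] {μ : Measure G} [SFinite μ] {E : Set G}
    (h : TransverseTo μ E) (hE : MeasurableSet E) (ν : Measure G) : TransverseTo (ν ∗ μ) E := by
  intro x
  have htranslate : MeasurableSet ((fun e => x + e) '' E) := by
    rw [Set.image_add_left]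
    exact measurable_const_add (-x) hE
  have hslice (a : G) : Prod.mk a ⁻¹' ((fun p : G × G => p.1 + p.2) ⁻¹' ((fun e => x + e) '' E)) =
      (fun e => (-a + x) + e) '' E := by
    rw [Set.image_add_left, Set.image_add_left]
    ext y
    simp [add_assoc]
  rw [Measure.conv, Measure.map_apply measurable_add htranslate,
    Measure.measure_prod_null (measurable_add htranslate)]
  exact .of_forall fun a => (congrArg μ (hslice a)).trans (h (-a + x))

end TransverseTo

section IndependentSeries

variable {Ω ι E : Type*} {mΩ : MeasurableSpace Ω} {P : Measure Ω} [Countable ι]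
  [AddCommMonoid E] [TopologicalSpace E] [PolishSpace E] [ContinuousAdd E]
  [MeasurableSpace E] [BorelSpace E] {Y : ι → Ω → E}

theorem indepFun_tsum_subtype_of_disjoint (hindep : iIndepFun Y P) (hY : ∀ i, Measurable (Y i))
    {S T : Set ι} (hST : Disjoint S T) :
    IndepFun (fun ω => ∑' i : S, Y i ω) (fun ω => ∑' i : T, Y i ω) P := by
  have hcomap (U : Set ι) : MeasurableSpace.comap (fun ω => ∑' i : U, Y i ω) inferInstance ≤
      ⨆ i ∈ U, MeasurableSpace.comap (Y i) inferInstance := by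
    let : MeasurableSpace Ω := ⨆ i ∈ U, MeasurableSpace.comap (Y i) inferInstance
    have hYU (i : U) : Measurable (Y i) :=
      (comap_measurable (Y i)).mono (le_iSup₂_of_le i.1 i.2 le_rfl) le_rfl
    exact (Measurable.tsum hYU).comap_le
  exact indep_of_indep_of_le_left (indep_of_indep_of_le_right
    (indep_iSup_of_disjoint (fun i => (hY i).comap_le) hindep hST) (hcomap T)) (hcomap S)

theorem map_tsum_eq_conv_map_tsum_compl [IsFiniteMeasure P] (hindep : iIndepFun Y P)
    (hY : ∀ i, Measurable (Y i)) {S : Set ι} (hS : ∀ᵐ ω ∂P, Summable fun i : S => Y i ω)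
    (hSc : ∀ᵐ ω ∂P, Summable fun i : (Sᶜ : Set ι) => Y i ω) :
    P.map (fun ω => ∑' i, Y i ω) =
      P.map (fun ω => ∑' i : S, Y i ω) ∗ P.map (fun ω => ∑' i : (Sᶜ : Set ι), Y i ω) := by
  rw [← (indepFun_tsum_subtype_of_disjoint hindep hY disjoint_compl_right).map_add_eq_map_conv_map
    (by fun_prop) (by fun_prop)]
  refine Measure.map_congr ?_
  filter_upwards [hS, hSc] with ω hω hωc
  exact (Summable.tsum_add_tsum_compl hω hωc).symm

end IndependentSeries

namespace HaarNull

variable {X : Type*} [NormedAddCommGroup X] [MeasurableSpace X]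

theorem mono {D E : Set X} (hE : HaarNull E) (hDE : D ⊆ E) : HaarNull D :=
  let ⟨μ, hμ, htrans⟩ := hE
  ⟨μ, hμ, TransverseTo.mono_set htrans hDE⟩

variable [TopologicalSpace.SeparableSpace X] [BorelSpace X]

theorem exists_transverseTo_ae_norm_le {E : Set X} (hnull : HaarNull E) (hE : MeasurableSet E)
    {r : ℝ} (hr : 0 < r) :
    ∃ μ : Measure X, IsProbabilityMeasure μ ∧ TransverseTo μ E ∧ ∀ᵐ y ∂μ, ‖y‖ ≤ r := by
  have := UniformSpace.secondCountable_of_separable X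
  obtain ⟨μ, hμ, htrans : TransverseTo μ E⟩ := hnull
  obtain ⟨z, hz⟩ := Measure.nonempty_support (IsProbabilityMeasure.ne_zero μ)
  let B := Metric.closedBall z r
  have hB : μ B ≠ 0 :=
    ((Measure.mem_support_iff_forall z).1 hz B (Metric.closedBall_mem_nhds z hr)).ne'
  have := cond_isProbabilityMeasure hB
  refine ⟨Measure.dirac (-z) ∗ μ[|B], inferInstance,
    (htrans.mono_ac cond_absolutelyContinuous).conv_left hE _, ?_⟩
  rw [Measure.dirac_conv, ae_map_iff (by fun_prop) (measurableSet_le (by fun_prop) (by fun_prop))]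
  filter_upwards [ae_cond_mem Metric.isClosed_closedBall.measurableSet] with y hy
  rwa [neg_add_eq_sub, ← dist_eq_norm]

theorem iUnion [CompleteSpace X] {ι : Type*} [Countable ι] {E : ι → Set X}
    (hnull : ∀ i, HaarNull (E i)) (hE : ∀ i, MeasurableSet (E i)) : HaarNull (⋃ i, E i) := by
  have := UniformSpace.secondCountable_of_separable X
  obtain ⟨r, hr, _, hrsum, -⟩ := NNReal.exists_pos_sum_of_countable one_ne_zero ι
  choose μ hμ htrans hnorm using fun i =>
    (hnull i).exists_transverseTo_ae_norm_le (hE i) (NNReal.coe_pos.2 (hr i))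
  obtain ⟨Ω, _, P, Y, hY, hlaw, hindep, _⟩ := exists_hasLaw_indepFun (fun _ => X) μ
  have hYnorm : ∀ᵐ ω ∂P, ∀ i, ‖Y i ω‖ ≤ r i := ae_all_iff.2 fun i =>
    ae_of_ae_map (hY i).aemeasurable ((hlaw i).map_eq ▸ hnorm i)
  have hYsum : ∀ᵐ ω ∂P, Summable fun i => Y i ω := hYnorm.mono fun ω hω =>
    .of_norm_bounded (NNReal.summable_coe.2 hrsum.summable) hω
  have hYsum_subtype (S : Set ι) : ∀ᵐ ω ∂P, Summable fun i : S => Y i ω :=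
    hYsum.mono fun ω hω => hω.subtype S
  refine ⟨P.map fun ω => ∑' i, Y i ω, Measure.isProbabilityMeasure_map (by fun_prop),
    TransverseTo.iUnion fun i => ?_⟩
  have hsingleton : (fun ω => ∑' j : ({i} : Set ι), Y j ω) = Y i :=
    funext fun ω => tsum_singleton i fun j => Y j ω
  rw [map_tsum_eq_conv_map_tsum_compl hindep hY (hYsum_subtype {i}) (hYsum_subtype {i}ᶜ),
    hsingleton, (hlaw i).map_eq, Measure.conv_comm]
  exact (htrans i).conv_left (hE i) _

end HaarNull

theorem exists_not_haarNull_inter_closedBall {X : Type*} [NormedAddCommGroup X] [CompleteSpace X]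
    [TopologicalSpace.SeparableSpace X] [MeasurableSpace X] [BorelSpace X] {E : Set X}
    (hE : MeasurableSet E) (hpos : ¬ HaarNull E) (x : X) :
    ∃ n : ℕ, 0 < n ∧ ¬ HaarNull (E ∩ Metric.closedBall x n) := by
  by_contra! hnull
  refine hpos ?_
  rw [← Metric.iUnion_inter_closedBall_nat E x]
  refine HaarNull.iUnion (fun n => (hnull (n + 1) n.succ_pos).mono ?_) fun n =>
    hE.inter Metric.isClosed_closedBall.measurableSet
  gcongr
  exact n.le_succ

theorem Compactivorous.mono_s13 {X : Type*} [NormedAddCommGroup X] [NormedSpace ℝ X] {D E : Set X}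
    (hD : Compactivorous D) (hDE : D ⊆ E) : Compactivorous E := fun K hK =>
  let ⟨z, δ, hδ, hsub⟩ := hD K hK
  ⟨z, δ, hδ, hsub.trans hDE⟩

/-- if `C` is a Haar positive closed convex set in a separable Banach
space, then some bounded piece `C ∩ n B_X` is Haar positive; consequently (using the
theorem that Haar positive closed bounded convex sets are compactivorous) `C` itself
is compactivorous. -/
theorem statement13 {X : Type*} [NormedAddCommGroup X] [NormedSpace ℝ X] [CompleteSpace X]
    [TopologicalSpace.SeparableSpace X] [MeasurableSpace X] [BorelSpace X]
    (hthm : ∀ D : Set X, IsClosed D → Convex ℝ D → Bornology.IsBounded D →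
      ¬ HaarNull D → Compactivorous D)
    (C : Set X) (hC : IsClosed C) (hconv : Convex ℝ C) (hpos : ¬ HaarNull C) :
    (∃ n : ℕ, 0 < n ∧ ¬ HaarNull (C ∩ Metric.closedBall (0 : X) n)) ∧
      Compactivorous C := by
  obtain ⟨n, hn, hpiece⟩ := exists_not_haarNull_inter_closedBall hC.measurableSet hpos 0
  have hcompactivorous : Compactivorous (C ∩ Metric.closedBall 0 n) :=
    hthm _ (hC.inter Metric.isClosed_closedBall) (hconv.inter (convex_closedBall 0 n))
      (Metric.isBounded_closedBall.subset Set.inter_subset_right) hpiece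
  exact ⟨⟨n, hn, hpiece⟩, hcompactivorous.mono_s13 Set.inter_subset_left⟩
end

section
/- Every Haar positive closed, convex set in a separable reflexive Banach space has nonempty interior. -/
/-!
The distance to a convex set `C` is a convex function, and it exceeds `s / 2` somewhere on every
ball of radius `s` unless `C` has an interior point. If `C` has empty interior, then for `s > 0` and
any `R` the weak compactness of the ball of radius `R` yields a finite set `F` of vectors of norm at
most `s` such that every `z` with `‖z‖ ≤ R` has some `f ∈ F` with `f + z` at distance at least
`s / 2` from `C`. By convexity in `z`, separation from a convex set in `ℝ^F` gives weights on `F`,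
independent of `z`, for which the mean distance of `f + z` to `C` is at least `s / 2`. When `F + z`
meets `C` no such distance exceeds `2 * s`, so the weight of `{f | f + z ∈ C}` is at most `3 / 4`.

With `s = 2⁻ⁿ` and `R = n`, add up independent points distributed according to these weights. For a
translate of `C`, fixing all terms but the `n`-th leaves a conditional probability of at most
`3 / 4` once `n` is large. As the event that the sum falls in the translate is almost determined by
finitely many terms, it has probability zero, and the law of the sum witnesses that `C` is Haar
null.
-/

open Filter Function MeasureTheory Metric Set
open scoped ENNReal symmDiff

section Distance

variable {E : Type*} [SeminormedAddCommGroup E] [NormedSpace ℝ E] {C : Set E}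

theorem convexOn_infDist (hC : Convex ℝ C) : ConvexOn ℝ univ fun x => infDist x C := by
  refine ⟨convex_univ, fun x _ y _ a b ha hb hab => ?_⟩
  rcases C.eq_empty_or_nonempty with rfl | hne
  · simp
  refine le_of_forall_pos_lt_add fun ε hε => ?_
  obtain ⟨p, hp, hxp⟩ := (infDist_lt_iff hne).1 (lt_add_of_pos_right (infDist x C) (half_pos hε))
  obtain ⟨q, hq, hyq⟩ := (infDist_lt_iff hne).1 (lt_add_of_pos_right (infDist y C) (half_pos hε))
  calc infDist (a • x + b • y) C
      ≤ dist (a • x + b • y) (a • p + b • q) := infDist_le_dist_of_mem (hC hp hq ha hb hab)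
    _ ≤ dist (a • x) (a • p) + dist (b • y) (b • q) := dist_add_add_le _ _ _ _
    _ = a * dist x p + b * dist y q := by
      simp only [dist_smul₀, Real.norm_of_nonneg ha, Real.norm_of_nonneg hb]
    _ ≤ a * (infDist x C + ε / 2) + b * (infDist y C + ε / 2) := by gcongr
    _ = a * infDist x C + b * infDist y C + (a + b) * (ε / 2) := by ring
    _ < a • infDist x C + b • infDist y C + ε := by
      rw [hab, smul_eq_mul, smul_eq_mul]; linarith

theorem exists_mem_closedBall_le_dist_mul_infDist (hC : Convex ℝ C) {y p : E} (hp : p ∈ C)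
    (hyp : 0 < dist y p) {ρ : ℝ} (hρ : 0 ≤ ρ) :
    ∃ u ∈ closedBall y ρ, (dist y p + ρ) * infDist y C ≤ dist y p * infDist u C := by
  set d := dist y p with hd
  let u := y + (ρ / d) • (y - p)
  have hu : u ∈ closedBall y ρ := by
    rw [mem_closedBall, dist_eq_norm, add_sub_cancel_left, norm_smul, ← dist_eq_norm,
      Real.norm_of_nonneg (by positivity), ← hd, div_mul_cancel₀ _ hyp.ne']
  have hyu : (ρ / (d + ρ)) • p + (d / (d + ρ)) • u = y := by
    match_scalars
    · field_simp
      ring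
    · field_simp
  have hle := (convexOn_infDist hC).2 (mem_univ p) (mem_univ u)
    (show 0 ≤ ρ / (d + ρ) by positivity) (show 0 ≤ d / (d + ρ) by positivity)
    (by rw [← add_div, add_comm, div_self (by positivity)])
  simp only [hyu, infDist_zero_of_mem hp, smul_eq_mul, mul_zero, zero_add] at hle
  rw [div_mul_eq_mul_div, le_div_iff₀ (by positivity), mul_comm] at hle
  exact ⟨u, hu, hle⟩

/-- Walking a distance `ρ` from `y` straight away from a nearly nearest point of `C` increases the
distance to `C` by nearly `ρ`. -/
theorem infDist_add_le_of_forall_closedBall_infDist_le (hC : Convex ℝ C) {y : E} {ρ r : ℝ}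
    (hρ : 0 < ρ) (hy : 0 < infDist y C) (h : ∀ u ∈ closedBall y ρ, infDist u C ≤ r) :
    infDist y C + ρ ≤ r := by
  have hne : C.Nonempty := nonempty_iff_ne_empty.2 fun hempty => by simp [hempty] at hy
  have hmul : ∀ p ∈ C, infDist y C * ρ ≤ (r - infDist y C) * dist y p := fun p hp => by
    obtain ⟨u, hu, hle⟩ := exists_mem_closedBall_le_dist_mul_infDist hC hp
      (hy.trans_le (infDist_le_dist_of_mem hp)) hρ.le
    linarith [mul_le_mul_of_nonneg_left (h u hu) (dist_nonneg (x := y) (y := p))]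
  have hgap : 0 < r - infDist y C := by
    obtain ⟨p, hp⟩ := hne
    exact pos_of_mul_pos_left ((mul_pos hy hρ).trans_le (hmul p hp)) dist_nonneg
  have hle : infDist y C * ρ / (r - infDist y C) ≤ infDist y C :=
    (le_infDist hne).2 fun p hp => (div_le_iff₀' hgap).2 (hmul p hp)
  rw [div_le_iff₀ hgap] at hle
  linarith [le_of_mul_le_mul_left hle hy]

theorem ball_subset_of_forall_closedBall_infDist_le (hC : IsClosed C) (hconv : Convex ℝ C)
    (hne : C.Nonempty) {x : E} {r s : ℝ} (hs : 0 ≤ s)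
    (h : ∀ u ∈ closedBall x s, infDist u C ≤ r) : ball x (s - r) ⊆ C := by
  intro y hy
  have hr : 0 ≤ r := infDist_nonneg.trans (h x (mem_closedBall_self hs))
  rw [mem_ball] at hy
  by_contra hyC
  have hadd := infDist_add_le_of_forall_closedBall_infDist_le hconv
    (ρ := s - dist y x) (by linarith) ((hC.notMem_iff_infDist_pos hne).1 hyC)
    fun u hu => h u (closedBall_subset_closedBall' (by linarith) hu)
  linarith [infDist_nonneg (x := y) (s := C)]

end Distance

section Reflexive

theorem completeSpace_of_surjective_inclusionInDoubleDual {𝕜 X : Type*} [RCLike 𝕜]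
    [NormedAddCommGroup X] [NormedSpace 𝕜 X]
    (hrefl : Surjective (NormedSpace.inclusionInDoubleDual 𝕜 X)) : CompleteSpace X :=
  ((NormedSpace.inclusionInDoubleDualLi 𝕜).isometry.isUniformInducing.completeSpace_congr
    hrefl).2 inferInstance

theorem isCompact_image_toWeakSpace_closedBall {𝕜 X : Type*} [RCLike 𝕜]
    [NormedAddCommGroup X] [NormedSpace 𝕜 X] [NormedSpace ℝ X] [IsScalarTower ℝ 𝕜 X]
    (hrefl : Surjective (NormedSpace.inclusionInDoubleDual 𝕜 X)) (x : X) (r : ℝ) :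
    IsCompact (toWeakSpace 𝕜 X '' closedBall x r) := by
  rw [← isClosed_closedBall.closure_eq, (convex_closedBall x r).toWeakSpace_closure 𝕜]
  refine NormedSpace.isCompact_closure_of_isBounded 𝕜 X _ ?_ fun φ _ => ?_
  · rw [(toWeakSpace 𝕜 X).injective.preimage_image]
    exact isBounded_closedBall
  · obtain ⟨y, hy⟩ := hrefl (WeakDual.toStrongDual φ)
    exact ⟨toWeakSpace 𝕜 X y, hy⟩

variable {X : Type*} [NormedAddCommGroup X] [NormedSpace ℝ X]

theorem closedBall_inter_iInter_nonempty_of_convex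
    (hrefl : Surjective (NormedSpace.inclusionInDoubleDual ℝ X)) {ι : Type*} {T : ι → Set X}
    (hclosed : ∀ i, IsClosed (T i)) (hconv : ∀ i, Convex ℝ (T i)) {x : X} {r : ℝ}
    (hfin : ∀ F : Finset ι, (closedBall x r ∩ ⋂ i ∈ F, T i).Nonempty) :
    (closedBall x r ∩ ⋂ i, T i).Nonempty := by
  have hweak : ∀ i, IsClosed (toWeakSpace ℝ X '' T i) := fun i => by
    rw [← (hclosed i).closure_eq, (hconv i).toWeakSpace_closure ℝ]
    exact isClosed_closure
  obtain ⟨_, ⟨y, hy, rfl⟩, hyT⟩ :=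
    (isCompact_image_toWeakSpace_closedBall hrefl x r).inter_iInter_nonempty _ hweak fun F => by
      obtain ⟨y, hy, hyF⟩ := hfin F
      exact ⟨toWeakSpace ℝ X y, mem_image_of_mem _ hy,
        mem_iInter₂.2 fun i hi => mem_image_of_mem _ (mem_iInter₂.1 hyF i hi)⟩
  refine ⟨y, hy, mem_iInter.2 fun i => ?_⟩
  exact (toWeakSpace ℝ X).injective.mem_set_image.1 (mem_iInter.1 hyT i)

theorem interior_nonempty_of_forall_finset_infDist_le
    (hrefl : Surjective (NormedSpace.inclusionInDoubleDual ℝ X)) {C : Set X} (hC : IsClosed C)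
    (hconv : Convex ℝ C) (hne : C.Nonempty) {r s R : ℝ} (hs : 0 ≤ s) (hrs : r < s)
    (h : ∀ F : Finset X, (F : Set X) ⊆ closedBall 0 s →
      ∃ x ∈ closedBall (0 : X) R, ∀ f ∈ F, infDist (f + x) C ≤ r) :
    (interior C).Nonempty := by
  classical
  let T : closedBall (0 : X) s → Set X := fun f => {x | infDist (f + x) C ≤ r}
  have hTclosed : ∀ f, IsClosed (T f) := fun f =>
    isClosed_le ((continuous_infDist_pt C).comp (continuous_const_add _)) continuous_const
  have hTconv : ∀ f, Convex ℝ (T f) := fun f => by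
    simpa [T] using ((convexOn_infDist hconv).translate_right (f : X)).convex_le r
  obtain ⟨x, -, hx⟩ : (closedBall (0 : X) R ∩ ⋂ f, T f).Nonempty := by
    refine closedBall_inter_iInter_nonempty_of_convex hrefl hTclosed hTconv fun F => ?_
    obtain ⟨x, hxR, hxF⟩ := h (F.image (↑)) (by simp)
    exact ⟨x, hxR, mem_iInter₂.2 fun f hf => hxF f (Finset.mem_image_of_mem _ hf)⟩
  have hball : ∀ u ∈ closedBall x s, infDist u C ≤ r := fun u hu => by
    have hux : u - x ∈ closedBall (0 : X) s := by
      rwa [mem_closedBall_zero_iff, ← dist_eq_norm, ← mem_closedBall]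
    simpa [T] using mem_iInter.1 hx ⟨u - x, hux⟩
  exact ⟨x, interior_maximal (ball_subset_of_forall_closedBall_infDist_le hC hconv hne hs hball)
    isOpen_ball (mem_ball_self (sub_pos.2 hrs))⟩

end Reflexive

section Weights

variable {ι : Type*} [Fintype ι]

theorem exists_mem_stdSimplex_forall_dotProduct_lt {K : Set (ι → ℝ)} (hconv : Convex ℝ K)
    (hopen : IsOpen K) (hupper : IsUpperSet K) (hne : K.Nonempty) {v : ι → ℝ} (hv : v ∉ K) :
    ∃ p ∈ stdSimplex ℝ ι, ∀ w ∈ K, p ⬝ᵥ v < p ⬝ᵥ w := by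
  classical
  obtain ⟨φ, hφ⟩ := geometric_hahn_banach_open_point hconv hopen hv
  obtain ⟨w₀, hw₀⟩ := hne
  let q : ι → ℝ := fun i => -φ (Pi.single i 1)
  have hφq : ∀ w, φ w = -(q ⬝ᵥ w) := fun w => by
    conv_lhs => rw [pi_eq_sum_univ' w]
    simp [q, dotProduct, mul_comm]
  have hq : ∀ i, 0 ≤ q i := fun i => by
    by_contra! hneg
    have hφi : 0 < φ (Pi.single i 1) := neg_neg_iff_pos.1 hneg
    let t := (φ v - φ w₀) / φ (Pi.single i 1)
    have ht : 0 ≤ t := div_nonneg (sub_nonneg.2 (hφ w₀ hw₀).le) hφi.le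
    have hlt := hφ (w₀ + t • Pi.single i 1) <| hupper
      (le_add_of_nonneg_right (smul_nonneg ht (Pi.single_nonneg.2 zero_le_one))) hw₀
    rw [map_add, map_smul, smul_eq_mul, div_mul_cancel₀ _ hφi.ne'] at hlt
    linarith
  have hsum : 0 < ∑ i, q i := by
    refine (Finset.sum_nonneg fun i _ => hq i).lt_of_ne' fun hzero => ?_
    have hq0 : q = 0 := funext fun i =>
      (Finset.sum_eq_zero_iff_of_nonneg fun i _ => hq i).1 hzero i (Finset.mem_univ i)
    simpa [hφq, hq0] using hφ w₀ hw₀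
  refine ⟨(∑ i, q i)⁻¹ • q, ⟨fun i => mul_nonneg (inv_nonneg.2 hsum.le) (hq i), ?_⟩,
    fun w hw => ?_⟩
  · simp only [Pi.smul_apply, smul_eq_mul, ← Finset.mul_sum, inv_mul_cancel₀ hsum.ne']
  · have hlt := hφ w hw
    rw [hφq, hφq, neg_lt_neg_iff] at hlt
    simpa only [smul_dotProduct, smul_eq_mul] using mul_lt_mul_of_pos_left hlt (inv_pos.2 hsum)

theorem exists_mem_stdSimplex_forall_le_sum {E : Type*} [AddCommGroup E] [Module ℝ E]
    {s : Set E} {g : ι → E → ℝ} {a : ℝ} (hs : s.Nonempty) (hg : ∀ i, ConvexOn ℝ s (g i))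
    (h : ∀ z ∈ s, ∃ i, a ≤ g i z) :
    ∃ p ∈ stdSimplex ℝ ι, ∀ z ∈ s, a ≤ ∑ i, p i * g i z := by
  obtain ⟨z₀, hz₀⟩ := hs
  let K : Set (ι → ℝ) := ⋃ z ∈ s, univ.pi fun i => Ioi (g i z)
  have hmemK : ∀ {w}, w ∈ K ↔ ∃ z ∈ s, ∀ i, g i z < w i := by simp [K]
  have hopen : IsOpen K :=
    isOpen_biUnion fun z _ => isOpen_set_pi finite_univ fun i _ => isOpen_Ioi
  have hconv : Convex ℝ K := by
    intro v hv w hw b c hb hc hbc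
    obtain ⟨x, hx, hxv⟩ := hmemK.1 hv
    obtain ⟨y, hy, hyw⟩ := hmemK.1 hw
    obtain ⟨i₀, -⟩ := h z₀ hz₀
    exact hmemK.2 ⟨b • x + c • y, (hg i₀).1 hx hy hb hc hbc, fun i =>
      ((hg i).convex_strict_epigraph (x := (x, v i)) ⟨hx, hxv i⟩ (y := (y, w i)) ⟨hy, hyw i⟩
        hb hc hbc).2⟩
  have hupper : IsUpperSet K := fun v w hvw hv => by
    obtain ⟨z, hz, hzv⟩ := hmemK.1 hv
    exact hmemK.2 ⟨z, hz, fun i => (hzv i).trans_le (hvw i)⟩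
  have hadd : ∀ z ∈ s, ∀ ε > 0, (fun i => g i z + ε) ∈ K := fun z hz ε hε =>
    hmemK.2 ⟨z, hz, fun i => lt_add_of_pos_right _ hε⟩
  have ha : (fun _ => a) ∉ K := fun hmem => by
    obtain ⟨z, hz, hlt⟩ := hmemK.1 hmem
    obtain ⟨i, hi⟩ := h z hz
    exact (hlt i).not_ge hi
  obtain ⟨p, hp, hpK⟩ := exists_mem_stdSimplex_forall_dotProduct_lt hconv hopen hupper
    ⟨_, hadd z₀ hz₀ 1 one_pos⟩ ha
  refine ⟨p, hp, fun z hz => le_of_forall_pos_lt_add fun ε hε => ?_⟩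
  simpa [dotProduct, mul_add, Finset.sum_add_distrib, ← Finset.sum_mul, hp.2]
    using hpK _ (hadd z hz ε hε)

theorem exists_isProbabilityMeasure_integral_eq_sum [MeasurableSpace ι]
    [MeasurableSingletonClass ι] {p : ι → ℝ} (hp : p ∈ stdSimplex ℝ ι) :
    ∃ ν : Measure ι, IsProbabilityMeasure ν ∧ ∀ g : ι → ℝ, ∫ i, g i ∂ν = ∑ i, p i * g i := by
  let P : PMF ι := PMF.ofFintype (fun i => ENNReal.ofReal (p i)) <| by
    rw [← ENNReal.ofReal_sum_of_nonneg fun i _ => hp.1 i, hp.2, ENNReal.ofReal_one]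
  refine ⟨P.toMeasure, inferInstance, fun g => ?_⟩
  simp [P, PMF.integral_eq_sum, ENNReal.toReal_ofReal (hp.1 _)]

end Weights

section ProductMeasure

theorem exists_cylinder_measureReal_symmDiff_lt {ι : Type*} {B : ι → Type*}
    [∀ i, MeasurableSpace (B i)] (P : Measure (∀ i, B i)) [IsFiniteMeasure P] {E : Set (∀ i, B i)}
    (hE : MeasurableSet E) {ε : ℝ} (hε : 0 < ε) :
    ∃ (s : Finset ι) (S : Set (∀ i : s, B i)),
      MeasurableSet (cylinder s S) ∧ P.real (E ∆ cylinder s S) < ε := by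
  obtain ⟨A, hA, hEA⟩ := (Measure.MeasureDense.of_generateFrom_isSetAlgebra_finite (μ := P)
    isSetAlgebra_measurableCylinders generateFrom_measurableCylinders.symm).approx E hE
      (measure_ne_top _ _) ε hε
  have hAm := MeasurableSet.of_mem_measurableCylinders hA
  obtain ⟨s, S, -, rfl⟩ := (mem_measurableCylinders _).1 hA
  exact ⟨s, S, hAm, (ENNReal.lt_ofReal_iff_toReal_lt (measure_ne_top _ _)).1 hEA⟩

variable {ι : Type*} [DecidableEq ι] {B : ι → Type*} [∀ i, MeasurableSpace (B i)]
  (ν : ∀ i, Measure (B i)) [∀ i, IsProbabilityMeasure (ν i)]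

theorem measurePreserving_update_infinitePi (i : ι) :
    MeasurePreserving (fun q : (∀ j, B j) × B i => update q.1 i q.2)
      ((Measure.infinitePi ν).prod (ν i)) (Measure.infinitePi ν) := by
  refine ⟨measurable_update', Measure.eq_infinitePi _ fun s t ht => ?_⟩
  have hpre : (fun q : (∀ j, B j) × B i => update q.1 i q.2) ⁻¹' Set.pi s t =
      Set.pi (s.erase i : Finset ι) t ×ˢ (if i ∈ s then t i else univ) := by
    ext ⟨ω, b⟩
    simp only [mem_preimage, Set.mem_pi, mem_prod, SetLike.mem_coe, Finset.mem_erase]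
    refine ⟨fun h => ⟨fun j hj => by simpa [hj.1] using h j hj.2, ?_⟩, fun ⟨hω, hb⟩ j hj => ?_⟩
    · split_ifs with hi
      · simpa using h i hi
      · trivial
    · rcases eq_or_ne j i with rfl | hji
      · simpa [hj] using hb
      · simpa [hji] using hω j ⟨hji, hj⟩
  rw [Measure.map_apply measurable_update' (.pi s.countable_toSet fun j _ => ht j), hpre,
    Measure.prod_prod, Measure.infinitePi_pi _ fun j _ => ht j]
  split_ifs with hi
  · rw [Finset.prod_erase_mul s (fun j => ν j (t j)) hi]
  · rw [measure_univ, mul_one, Finset.erase_eq_of_notMem hi]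

theorem infinitePi_inter_le_of_section_le {i : ι} {E A : Set (∀ j, B j)} (hE : MeasurableSet E)
    (hA : MeasurableSet A) (hAi : ∀ ω b, update ω i b ∈ A → ω ∈ A) {q : ℝ≥0∞}
    (hsec : ∀ ω, ν i {b | update ω i b ∈ E} ≤ q) :
    Measure.infinitePi ν (E ∩ A) ≤ q * Measure.infinitePi ν A := by
  have hpres := measurePreserving_update_infinitePi ν i
  have hEA := hE.inter hA
  rw [← hpres.measure_preimage hEA.nullMeasurableSet,
    Measure.prod_apply (hpres.measurable hEA), ← lintegral_indicator_const hA]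
  refine lintegral_mono fun ω => ?_
  by_cases hω : ω ∈ A
  · rw [indicator_of_mem hω]
    exact (measure_mono fun b hb => hb.1).trans (hsec ω)
  · rw [indicator_of_notMem hω, nonpos_iff_eq_zero, ← measure_empty (μ := ν i)]
    congr 1
    exact eq_empty_of_forall_notMem fun b hb => hω (hAi ω b hb.2)

theorem infinitePi_eq_zero_of_eventually_section_le [Infinite ι] {E : Set (∀ j, B j)}
    (hE : MeasurableSet E) {q : ℝ} (hq : q < 1)
    (hsec : ∀ᶠ i in cofinite, ∀ ω, (ν i).real {b | update ω i b ∈ E} ≤ q) :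
    Measure.infinitePi ν E = 0 := by
  set P := Measure.infinitePi ν
  rw [← measureReal_eq_zero_iff]
  by_contra hne
  have hm : 0 < P.real E := measureReal_nonneg.lt_of_ne' hne
  obtain ⟨s, S, hS, hES⟩ := exists_cylinder_measureReal_symmDiff_lt P hE
    (ε := (1 - q) * P.real E / 2) (half_pos (mul_pos (sub_pos.2 hq) hm))
  obtain ⟨i, hi, his⟩ := (hsec.and s.eventually_cofinite_notMem).exists
  have hq0 : 0 ≤ q := by
    obtain ⟨ω⟩ : Nonempty (∀ j, B j) := Measure.nonempty_of_neZero P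
    exact measureReal_nonneg.trans (hi ω)
  have hinter : P.real (E ∩ cylinder s S) ≤ q * P.real (cylinder s S) := by
    have hle := infinitePi_inter_le_of_section_le ν (i := i) hE hS (fun ω b h => ?_)
      fun ω => (ENNReal.le_ofReal_iff_toReal_le (measure_ne_top _ _) hq0).2 (hi ω)
    · simpa [measureReal_def, hq0] using ENNReal.toReal_mono (by finiteness) hle
    · rwa [mem_cylinder, s.dependsOn_restrict fun j hj =>
        update_of_ne (ne_of_mem_of_not_mem hj his) b ω, ← mem_cylinder] at h
  have hcyl : P.real (cylinder s S) - P.real E ≤ P.real (E ∆ cylinder s S) :=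
    (abs_sub_le_iff.1
      (abs_measureReal_sub_le_measureReal_symmDiff hE.nullMeasurableSet hS.nullMeasurableSet)).2
  have hsdiff : P.real (E \ cylinder s S) ≤ P.real (E ∆ cylinder s S) :=
    measureReal_mono subset_union_left
  have hsplit := measureReal_inter_add_sdiff (μ := P) (s := E) hS
  linarith [mul_le_mul_of_nonneg_left hcyl hq0,
    mul_nonneg (sub_nonneg.2 hq.le) (measureReal_nonneg (μ := P) (s := E ∆ cylinder s S))]

end ProductMeasure

section RandomSeries

theorem stronglyMeasurable_tsum {Ω X : Type*} [MeasurableSpace Ω] [NormedAddCommGroup X]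
    {f : ℕ → Ω → X} (hf : ∀ n, StronglyMeasurable (f n)) (hsum : ∀ ω, Summable fun n => f n ω) :
    StronglyMeasurable fun ω => ∑' n, f n ω :=
  stronglyMeasurable_of_tendsto atTop
    (fun N => Finset.stronglyMeasurable_fun_sum (Finset.range N) fun n _ => hf n)
    (tendsto_pi_nhds.2 fun ω => (hsum ω).hasSum.tendsto_sum_nat)

theorem tsum_apply_update_s15 {ι X : Type*} [DecidableEq ι] [NormedAddCommGroup X] {B : ι → Type*}
    {e : ∀ i, B i → X} {ω : ∀ i, B i} (hsum : Summable fun i => e i (ω i)) (i : ι) (b : B i) :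
    ∑' j, e j (update ω i b j) = e i b + (∑' j, e j (ω j) - e i (ω i)) := by
  simp only [apply_update e]
  rw [(hsum.hasSum.update i (e i b)).tsum_eq]
  abel

theorem haarNull_of_eventually_measureReal_le {X : Type*} [NormedAddCommGroup X] [CompleteSpace X]
    [MeasurableSpace X] [BorelSpace X] {C : Set X} (hC : MeasurableSet C) {B : ℕ → Type*}
    [∀ n, MeasurableSpace (B n)] (ν : ∀ n, Measure (B n)) [∀ n, IsProbabilityMeasure (ν n)]
    {e : ∀ n, B n → X} (he : ∀ n, StronglyMeasurable (e n)) {u : ℕ → ℝ} (hu : Summable u)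
    (heu : ∀ n b, ‖e n b‖ ≤ u n) {q : ℝ} (hq : q < 1)
    (h : ∀ r, ∀ᶠ n in atTop, ∀ z, ‖z‖ ≤ r → (ν n).real {b | e n b + z ∈ C} ≤ q) :
    HaarNull C := by
  let S : (∀ n, B n) → X := fun ω => ∑' n, e n (ω n)
  have hsum : ∀ ω : ∀ n, B n, Summable fun n => e n (ω n) := fun ω =>
    .of_norm_bounded hu fun n => heu n (ω n)
  have hS : Measurable S := (stronglyMeasurable_tsum
    (fun n => (he n).comp_measurable (measurable_pi_apply n)) hsum).measurable
  have hSle : ∀ ω, ‖S ω‖ ≤ ∑' n, u n := fun ω =>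
    tsum_of_norm_bounded hu.hasSum fun n => heu n (ω n)
  refine ⟨(Measure.infinitePi ν).map S, Measure.isProbabilityMeasure_map hS.aemeasurable,
    fun x => ?_⟩
  have hxC : MeasurableSet ((fun y => -x + y) ⁻¹' C) := measurable_const_add (-x) hC
  rw [image_add_left, Measure.map_apply hS hxC]
  refine infinitePi_eq_zero_of_eventually_section_le ν (hS hxC) hq ?_
  rw [Nat.cofinite_eq_atTop]
  filter_upwards [h (‖x‖ + (∑' n, u n + ∑' n, u n))] with n hn ω
  have hz : ‖-x + (S ω - e n (ω n))‖ ≤ ‖x‖ + (∑' n, u n + ∑' n, u n) := by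
    have hen : ‖e n (ω n)‖ ≤ ∑' n, u n := (heu n _).trans <|
      hu.le_tsum n fun m _ => (norm_nonneg _).trans (heu m (ω m))
    calc ‖-x + (S ω - e n (ω n))‖ ≤ ‖-x‖ + (‖S ω‖ + ‖e n (ω n)‖) :=
        (norm_add_le _ _).trans (by gcongr; exact norm_sub_le _ _)
      _ ≤ ‖x‖ + (∑' n, u n + ∑' n, u n) := by
        rw [norm_neg]
        gcongr
        exact hSle ω
  simpa only [S, mem_preimage, tsum_apply_update_s15 (hsum ω), add_left_comm (-x)] using hn _ hz

end RandomSeries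

theorem integral_infDist_le_mul_measureReal_compl {X Ω : Type*} [PseudoMetricSpace X]
    [MeasurableSpace Ω] (μ : Measure Ω) [IsFiniteMeasure μ] {C : Set X} {f : Ω → X} {d : ℝ}
    (hd : ∀ a b, dist (f a) (f b) ≤ d) (hmeas : MeasurableSet (f ⁻¹' C))
    (hne : (f ⁻¹' C).Nonempty) : ∫ ω, infDist (f ω) C ∂μ ≤ d * μ.real (f ⁻¹' C)ᶜ := by
  obtain ⟨a, ha : f a ∈ C⟩ := hne
  have hle : (fun ω => infDist (f ω) C) ≤ (f ⁻¹' C)ᶜ.indicator fun _ => d := fun ω => by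
    by_cases hω : f ω ∈ C
    · simp [infDist_zero_of_mem hω, hω]
    · simpa [hω] using (infDist_le_dist_of_mem ha).trans (hd ω a)
  calc ∫ ω, infDist (f ω) C ∂μ ≤ ∫ ω, (f ⁻¹' C)ᶜ.indicator (fun _ => d) ω ∂μ :=
      integral_mono_of_nonneg (.of_forall fun _ => infDist_nonneg)
        ((integrable_const d).indicator hmeas.compl) (.of_forall hle)
    _ = d * μ.real (f ⁻¹' C)ᶜ := by
      rw [integral_indicator_const _ hmeas.compl, smul_eq_mul, mul_comm]

section HaarNull

theorem haarNull_empty {X : Type*} [NormedAddCommGroup X] [MeasurableSpace X] :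
    HaarNull (∅ : Set X) :=
  ⟨Measure.dirac 0, inferInstance, fun x => by rw [image_empty, measure_empty]⟩

variable {X : Type*} [NormedAddCommGroup X] [NormedSpace ℝ X] {C : Set X}

theorem exists_finset_forall_exists_le_infDist
    (hrefl : Surjective (NormedSpace.inclusionInDoubleDual ℝ X)) (hC : IsClosed C)
    (hconv : Convex ℝ C) (hne : C.Nonempty) (hint : interior C = ∅) {r s : ℝ} (hs : 0 ≤ s)
    (hrs : r < s) (R : ℝ) :
    ∃ F : Finset X, (F : Set X) ⊆ closedBall 0 s ∧
      ∀ z ∈ closedBall (0 : X) R, ∃ f : F, r ≤ infDist (f + z) C := by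
  by_contra! hcon
  refine (interior_nonempty_of_forall_finset_infDist_le hrefl hC hconv hne hs hrs (R := R)
    fun F hF => ?_).ne_empty hint
  obtain ⟨z, hz, hzF⟩ := hcon F hF
  exact ⟨z, hz, fun f hf => (hzF ⟨f, hf⟩).le⟩

theorem exists_finset_measure_forall_measureReal_le [MeasurableSpace X] [BorelSpace X]
    (hrefl : Surjective (NormedSpace.inclusionInDoubleDual ℝ X)) (hC : IsClosed C)
    (hconv : Convex ℝ C) (hne : C.Nonempty) (hint : interior C = ∅) {c R : ℝ} (hc : 0 < c)
    (hR : 0 ≤ R) :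
    ∃ F : Finset X, (F : Set X) ⊆ closedBall 0 c ∧ ∃ ν : Measure F, IsProbabilityMeasure ν ∧
      ∀ z ∈ closedBall (0 : X) R, ν.real {f | (f : X) + z ∈ C} ≤ 3 / 4 := by
  obtain ⟨F, hF, hfar⟩ := exists_finset_forall_exists_le_infDist hrefl hC hconv hne hint hc.le
    (half_lt_self hc) R
  have hdistconv : ∀ f : F, ConvexOn ℝ (closedBall (0 : X) R) fun z => infDist (f + z) C :=
    fun f => ((convexOn_infDist hconv).translate_right (f : X)).subset (subset_univ _)
      (convex_closedBall 0 R)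
  obtain ⟨p, hp, hpz⟩ :=
    exists_mem_stdSimplex_forall_le_sum (nonempty_closedBall.2 hR) hdistconv hfar
  obtain ⟨ν, hν, hνp⟩ := exists_isProbabilityMeasure_integral_eq_sum hp
  refine ⟨F, hF, ν, hν, fun z hz => ?_⟩
  have hdist : ∀ f g : F, dist ((f : X) + z) (g + z) ≤ 2 * c := fun f g => by
    rw [dist_add_right, two_mul]
    exact (dist_triangle_right _ _ 0).trans (add_le_add (hF f.2) (hF g.2))
  have hmeas : MeasurableSet {f : F | (f : X) + z ∈ C} := .of_discrete
  rcases {f : F | (f : X) + z ∈ C}.eq_empty_or_nonempty with hempty | hmem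
  · rw [hempty, measureReal_empty]
    norm_num
  have hle : c / 2 ≤ 2 * c * ν.real {f : F | (f : X) + z ∈ C}ᶜ :=
    (hpz z hz).trans <| (hνp _).symm.trans_le <|
      integral_infDist_le_mul_measureReal_compl ν hdist hmeas hmem
  rw [probReal_compl_eq_one_sub hmeas] at hle
  exact le_of_mul_le_mul_left (by linarith) hc

end HaarNull

theorem statement15_general {X : Type*} [NormedAddCommGroup X] [NormedSpace ℝ X]
    [MeasurableSpace X] [BorelSpace X]
    (hrefl : Surjective (NormedSpace.inclusionInDoubleDual ℝ X))
    (C : Set X) (hC : IsClosed C) (hconv : Convex ℝ C) (hpos : ¬ HaarNull C) :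
    (interior C).Nonempty := by
  have hne : C.Nonempty := nonempty_iff_ne_empty.2 fun h => hpos (h ▸ haarNull_empty)
  have := completeSpace_of_surjective_inclusionInDoubleDual hrefl
  by_contra hint
  choose F hF ν hν hmass using fun n : ℕ => exists_finset_measure_forall_measureReal_le hrefl hC
    hconv hne (not_nonempty_iff_eq_empty.1 hint) (pow_pos (one_half_pos (α := ℝ)) n) n.cast_nonneg
  refine hpos (haarNull_of_eventually_measureReal_le hC.measurableSet ν
    (e := fun n => ((↑) : F n → X)) (fun n => .of_discrete) summable_geometric_two
    (fun n f => mem_closedBall_zero_iff.1 (hF n f.2)) (by norm_num : (3 / 4 : ℝ) < 1) fun r => ?_)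
  filter_upwards [tendsto_natCast_atTop_atTop.eventually_ge_atTop r] with n hn z hz
  exact hmass n z (mem_closedBall_zero_iff.2 (hz.trans hn))

/-- in a separable reflexive Banach space (reflexivity expressed by the
surjectivity of the canonical embedding into the double dual), every Haar positive
closed convex set has nonempty interior. -/
theorem statement15 {X : Type*} [NormedAddCommGroup X] [NormedSpace ℝ X] [CompleteSpace X]
    [TopologicalSpace.SeparableSpace X] [MeasurableSpace X] [BorelSpace X]
    (hrefl : Function.Surjective (NormedSpace.inclusionInDoubleDual ℝ X))
    (C : Set X) (hC : IsClosed C) (hconv : Convex ℝ C) (hpos : ¬ HaarNull C) :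
    (interior C).Nonempty :=
  statement15_general hrefl C hC hconv hpos
end
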